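/- arXiv:2002.01610 — 3 statements merged into one kernel-verified Lean document; each statement's English description precedes it below -/
import Mathlib

section
/- Let G and H be two activity-on-edge graphs with the same set of tasks (i.e., there is a label-preserving bijection between the task edges of G and those of H). Then G and H have the same reachability relation on their tasks (for all tasks T ≠ T', T reaches T' in G if and only if T reaches T' in H) if and only if G and H have the same set of potential critical paths. -/
namespace AOEPaper

/-- An activity-on-edge graph: a directed multigraph on the vertex set `verts`,
whose task edges are indexed by the type `T` (the distinct task labels), each task `t`
being an edge from `St t` to `En t`, together with a multiset `unl` of unlabeled edges. -/
structure AOE (V T : Type) where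
  verts : Finset V
  St : T → V
  En : T → V
  stMem : ∀ t, St t ∈ verts
  enMem : ∀ t, En t ∈ verts
  unl : Multiset (V × V)
  unlMem : ∀ e ∈ unl, e.1 ∈ verts ∧ e.2 ∈ verts

/-- One-step adjacency: an unlabeled edge or a task edge from `a` to `b`. -/
def AOE.adj {V T : Type} (G : AOE V T) (a b : V) : Prop :=
  (a, b) ∈ G.unl ∨ ∃ t, G.St t = a ∧ G.En t = b

/-- The graph has no directed cycle. -/
def AOE.Acyclic {V T : Type} (G : AOE V T) : Prop :=
  ∀ v : V, ¬ Relation.TransGen G.adj v v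

/-- Task `t` reaches task `t'`: `En t = St t'` or there is a directed path from
`En t` to `St t'` (intended only for `t ≠ t'`). -/
def AOE.reach {V T : Type} (G : AOE V T) (t t' : T) : Prop :=
  Relation.ReflTransGen G.adj (G.En t) (G.St t')

/-- A sequence of tasks in which each task reaches the next. -/
def AOE.chain {V T : Type} (G : AOE V T) (l : List T) : Prop :=
  l.Chain' fun t t' => t ≠ t' ∧ G.reach t t'

/-- A potential critical path: a maximal sequence of tasks in which each task
reaches the next (not a subsequence of any other such sequence). -/
def AOE.critPath {V T : Type} (G : AOE V T) (l : List T) : Prop :=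
  G.chain l ∧ ∀ l' : List T, G.chain l' → l.Sublist l' → l' = l

/-- Two AOEs with the same task labels are equivalent if they have the same set of
potential critical paths. -/
def AOE.Equiv {V W T : Type} (G : AOE V T) (H : AOE W T) : Prop :=
  ∀ l : List T, G.critPath l ↔ H.critPath l

/-- An AOE is optimal if it minimizes the number of vertices in its equivalence class. -/
def Optimal {W T : Type} (G : AOE W T) : Prop :=
  ∀ (U : Type) (H : AOE U T), H.Acyclic → AOE.Equiv G H → G.verts.card ≤ H.verts.card

/-- The vertex map replacing `v` by `u`. -/
def mergeV {V : Type} [DecidableEq V] (u v x : V) : V := if x = v then u else x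

theorem mergeV_mem {V : Type} [DecidableEq V] {S : Finset V} (u v x : V) (hx : x ∈ S) :
    mergeV u v x ∈ insert u (S.erase v) := by
  unfold mergeV
  split_ifs with h
  · exact Finset.mem_insert_self _ _
  · exact Finset.mem_insert_of_mem (Finset.mem_erase.mpr ⟨h, hx⟩)

/-- Merge vertices `u` and `v` into the single vertex `u`. -/
def AOE.merge {V T : Type} [DecidableEq V] (G : AOE V T) (u v : V) : AOE V T where
  verts := insert u (G.verts.erase v)
  St t := mergeV u v (G.St t)
  En t := mergeV u v (G.En t)
  stMem t := mergeV_mem u v (G.St t) (G.stMem t)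
  enMem t := mergeV_mem u v (G.En t) (G.enMem t)
  unl := G.unl.map fun e => (mergeV u v e.1, mergeV u v e.2)
  unlMem := by
    intro e he
    rw [Multiset.mem_map] at he
    obtain ⟨a, ha, rfl⟩ := he
    obtain ⟨h1, h2⟩ := G.unlMem a ha
    exact ⟨mergeV_mem u v a.1 h1, mergeV_mem u v a.2 h2⟩

/-- Delete one copy of the unlabeled edge `(u, v)`. -/
def AOE.delUnl {V T : Type} [DecidableEq V] (G : AOE V T) (u v : V) : AOE V T where
  verts := G.verts
  St := G.St
  En := G.En
  stMem := G.stMem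
  enMem := G.enMem
  unl := G.unl.erase (u, v)
  unlMem := fun e he => G.unlMem e (Multiset.mem_of_mem_erase he)

/-- Rule 1 (outgoing version): `u` and `v` are distinct vertices with no outgoing task
edges and precisely the same outgoing neighbors. -/
def Rule1OutCond {V T : Type} (G : AOE V T) (u v : V) : Prop :=
  u ∈ G.verts ∧ v ∈ G.verts ∧ u ≠ v ∧
    (∀ t, G.St t ≠ u) ∧ (∀ t, G.St t ≠ v) ∧ ∀ w, G.adj u w ↔ G.adj v w

/-- Rule 1 (incoming version): `u` and `v` are distinct vertices with no incoming task
edges and precisely the same incoming neighbors. -/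
def Rule1InCond {V T : Type} (G : AOE V T) (u v : V) : Prop :=
  u ∈ G.verts ∧ v ∈ G.verts ∧ u ≠ v ∧
    (∀ t, G.En t ≠ u) ∧ (∀ t, G.En t ≠ v) ∧ ∀ w, G.adj w u ↔ G.adj w v

/-- Rule 2: `(u, v)` is an unlabeled edge and there is another directed path from `u`
to `v` not using this edge. -/
def Rule2Cond {V T : Type} [DecidableEq V] (G : AOE V T) (u v : V) : Prop :=
  (u, v) ∈ G.unl ∧ Relation.TransGen (G.delUnl u v).adj u v

/-- Rule 3: `(u, v)` is an unlabeled edge such that (i) there is no other path from `u`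
to `v`; (ii) if `u` has an outgoing task then `v` has no incoming edge other than `(u,v)`;
(iii) if `v` has an incoming task then `u` has no outgoing edge other than `(u,v)`;
(iv) every incoming neighbor of `v` has a path to every outgoing neighbor of `u`. -/
def Rule3Cond {V T : Type} [DecidableEq V] (G : AOE V T) (u v : V) : Prop :=
  (u, v) ∈ G.unl ∧
  (¬ Relation.TransGen (G.delUnl u v).adj u v) ∧
  ((∃ t, G.St t = u) → (∀ t, G.En t ≠ v) ∧ ∀ w, (w, v) ∈ G.unl → w = u) ∧
  ((∃ t, G.En t = v) → (∀ t, G.St t ≠ u) ∧ ∀ w, (u, w) ∈ G.unl → w = v) ∧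
  ∀ w z, G.adj w v → G.adj u z → Relation.ReflTransGen G.adj w z

/-- One application of a simplification rule. -/
inductive Step {V T : Type} [DecidableEq V] : AOE V T → AOE V T → Prop
  | rule1out {G : AOE V T} (u v : V) : Rule1OutCond G u v → Step G (G.merge u v)
  | rule1in {G : AOE V T} (u v : V) : Rule1InCond G u v → Step G (G.merge u v)
  | rule2 {G : AOE V T} (u v : V) : Rule2Cond G u v → Step G (G.delUnl u v)
  | rule3 {G : AOE V T} (u v : V) : Rule3Cond G u v → Step G ((G.delUnl u v).merge u v)

/-- A canonical AOE: the naive expansion of an activity-on-node graph. Each task has its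
own pair of endpoint vertices, all pairwise distinct; there are a global start vertex `s`
and a global end vertex `e`; unlabeled edges other than those leaving `s` or entering `e`
go from end vertices of tasks to start vertices of tasks; `s` has unlabeled edges to
exactly the vertices whose only incoming edges come from `s`, and `e` has unlabeled edges
from exactly the vertices whose only outgoing edges go to `e`. -/
def Canonical {V T : Type} [DecidableEq V] [Fintype T] (G : AOE V T) : Prop :=
  G.Acyclic ∧ G.unl.Nodup ∧
  Function.Injective G.St ∧ Function.Injective G.En ∧
  (∀ t t' : T, G.St t ≠ G.En t') ∧
  ∃ s e : V, s ≠ e ∧ s ∈ G.verts ∧ e ∈ G.verts ∧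
    (∀ t, G.St t ≠ s ∧ G.St t ≠ e ∧ G.En t ≠ s ∧ G.En t ≠ e) ∧
    (G.verts =
      insert s (insert e (Finset.image G.St Finset.univ ∪ Finset.image G.En Finset.univ))) ∧
    (∀ a b : V, (a, b) ∈ G.unl → a ≠ s → b ≠ e → (∃ t, G.En t = a) ∧ ∃ t', G.St t' = b) ∧
    (∀ b : V, (s, b) ∈ G.unl ↔
      b ∈ G.verts ∧ b ≠ s ∧ (∀ t, G.En t ≠ b) ∧ ∀ a, (a, b) ∈ G.unl → a = s) ∧
    (∀ a : V, (a, e) ∈ G.unl ↔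
      a ∈ G.verts ∧ a ≠ e ∧ (∀ t, G.St t ≠ a) ∧ ∀ b, (a, b) ∈ G.unl → b = e)

/-- An output AOE: obtained from a canonical AOE by a finite sequence of rule
applications, such that no rule can still be applied. -/
def IsOutput {V T : Type} [DecidableEq V] [Fintype T] (G A : AOE V T) : Prop :=
  Canonical G ∧ Relation.ReflTransGen Step G A ∧ ∀ B : AOE V T, ¬ Step A B

theorem mergeSetV_mem {V : Type} [DecidableEq V] {S : Finset V} (C : Finset V) (c x : V)
    (hx : x ∈ S) : (if x ∈ C then c else x) ∈ insert c (S \ C) := by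
  split_ifs with h
  · exact Finset.mem_insert_self _ _
  · exact Finset.mem_insert_of_mem (Finset.mem_sdiff.mpr ⟨hx, h⟩)

/-- Merge all vertices of `C` into the single vertex `c`. -/
def AOE.mergeSet {V T : Type} [DecidableEq V] (G : AOE V T) (C : Finset V) (c : V) :
    AOE V T where
  verts := insert c (G.verts \ C)
  St t := if G.St t ∈ C then c else G.St t
  En t := if G.En t ∈ C then c else G.En t
  stMem t := mergeSetV_mem C c (G.St t) (G.stMem t)
  enMem t := mergeSetV_mem C c (G.En t) (G.enMem t)
  unl := G.unl.map fun e => (if e.1 ∈ C then c else e.1, if e.2 ∈ C then c else e.2)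
  unlMem := by
    intro e he
    rw [Multiset.mem_map] at he
    obtain ⟨a, ha, rfl⟩ := he
    obtain ⟨h1, h2⟩ := G.unlMem a ha
    exact ⟨mergeSetV_mem C c a.1 h1, mergeSetV_mem C c a.2 h2⟩

/-!
Reachability determines the chains, hence the maximal ones. Conversely, if no two distinct
tasks of `G` reach each other, then distinct tasks of a chain have distinct pairs of endpoints, so
chains have bounded length and every chain extends to a potential critical path. When `t` reaches
`t'` in `G`, extend the chain `[t, t']` to a potential critical path; it is also one of `H`, where
transitivity gives back that `t` reaches `t'`. That `H` has the same acyclicity property follows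
from the critical paths: if `t` and `t' ≠ t` reach each other, any chain through `t` can be
lengthened by the detour `t, t', t`, so no potential critical path contains `t`.
-/

theorem exists_maximal_sublist_of_length_le {α : Type*} {P : List α → Prop} {n : ℕ}
    (hP : ∀ l, P l → l.length ≤ n) {l : List α} (hl : P l) :
    ∃ m, (P m ∧ ∀ m', P m' → m.Sublist m' → m' = m) ∧ l.Sublist m := by
  have hfin : (List.length '' {m | P m ∧ l.Sublist m}).Finite :=
    (Set.finite_Iic n).subset (Set.image_subset_iff.2 fun m hm => hP m hm.1)
  obtain ⟨m, ⟨hm, hlm⟩, hmax⟩ := hfin.exists_maximalFor' _ _ ⟨l, hl, List.Sublist.refl l⟩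
  refine ⟨m, ⟨hm, fun m' hm' hs => ?_⟩, hlm⟩
  exact (hs.eq_of_length_le (hmax ⟨hm', hlm.trans hs⟩ hs.length_le)).symm

namespace AOE

variable {V W T : Type} {G : AOE V T} {H : AOE W T}

theorem reach_trans {t₁ t₂ t₃ : T} (h₁₂ : G.reach t₁ t₂) (h₂₃ : G.reach t₂ t₃) :
    G.reach t₁ t₃ :=
  (h₁₂.tail (Or.inr ⟨t₂, rfl, rfl⟩)).trans h₂₃

theorem Acyclic.not_reach_self (hG : G.Acyclic) (t : T) : ¬ G.reach t t := fun h =>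
  hG (G.St t) (.head' (Or.inr ⟨t, rfl, rfl⟩) h)

/-- No two distinct tasks reach each other. This is the part of `AOE.Acyclic` that potential
critical paths can detect; a directed cycle of unlabeled edges, for instance, is not excluded. -/
def TaskAcyclic (G : AOE V T) : Prop :=
  ∀ ⦃t t' : T⦄, G.reach t t' → G.reach t' t → t = t'

theorem Acyclic.taskAcyclic (hG : G.Acyclic) : G.TaskAcyclic := fun t _ h h' =>
  absurd (reach_trans h h') (hG.not_reach_self t)

theorem TaskAcyclic.isTrans (hG : G.TaskAcyclic) :
    IsTrans T fun t t' => t ≠ t' ∧ G.reach t t' where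
  trans := by
    rintro t₁ t₂ t₃ ⟨hne, h₁₂⟩ ⟨-, h₂₃⟩
    refine ⟨?_, reach_trans h₁₂ h₂₃⟩
    rintro rfl
    exact hne (hG h₁₂ h₂₃)

theorem TaskAcyclic.pairwise_of_chain (hG : G.TaskAcyclic) {l : List T} (hl : G.chain l) :
    l.Pairwise fun t t' => t ≠ t' ∧ G.reach t t' :=
  have := hG.isTrans
  List.isChain_iff_pairwise.1 hl

/-- The start and end vertex of a task, as elements of the finite type of vertices of `G`;
used to bound the length of chains when there may be infinitely many tasks. -/
def endpoints (G : AOE V T) (t : T) : G.verts × G.verts :=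
  (⟨G.St t, G.stMem t⟩, ⟨G.En t, G.enMem t⟩)

theorem reach_congr_endpoints {t₁ t₁' t₂ t₂' : T} (h₁ : G.endpoints t₁ = G.endpoints t₁')
    (h₂ : G.endpoints t₂ = G.endpoints t₂') : G.reach t₁ t₂ ↔ G.reach t₁' t₂' := by
  have hEn : G.En t₁ = G.En t₁' := congrArg (fun p => (p.2 : V)) h₁
  have hSt : G.St t₂ = G.St t₂' := congrArg (fun p => (p.1 : V)) h₂
  rw [reach, reach, hEn, hSt]

theorem TaskAcyclic.nodup_map_endpoints (hG : G.TaskAcyclic) {l : List T} (hl : G.chain l) :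
    (l.map G.endpoints).Nodup :=
  List.pairwise_map.2 <| (hG.pairwise_of_chain hl).imp fun ⟨hne, h⟩ heq =>
    hne (hG h ((reach_congr_endpoints heq heq.symm).1 h))

theorem TaskAcyclic.length_le_of_chain (hG : G.TaskAcyclic) {l : List T} (hl : G.chain l) :
    l.length ≤ G.verts.card * G.verts.card := by
  simpa using (hG.nodup_map_endpoints hl).length_le_card

theorem TaskAcyclic.exists_critPath_sublist (hG : G.TaskAcyclic) {l : List T}
    (hl : G.chain l) : ∃ m, G.critPath m ∧ l.Sublist m :=
  exists_maximal_sublist_of_length_le (fun _ => hG.length_le_of_chain) hl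

theorem chain_detour {l₁ l₂ : List T} {t t' : T} (hl : G.chain (l₁ ++ t :: l₂)) (hne : t ≠ t')
    (h : G.reach t t') (h' : G.reach t' t) : G.chain (l₁ ++ t :: t' :: t :: l₂) := by
  obtain ⟨hleft, hright⟩ := List.isChain_split.1 hl
  exact List.isChain_split.2 ⟨hleft, .cons_cons ⟨hne, h⟩ (.cons_cons ⟨hne.symm, h'⟩ hright)⟩

theorem critPath.eq_of_reach_of_reach {l : List T} (hl : G.critPath l) {t t' : T}
    (ht : t ∈ l) (h : G.reach t t') (h' : G.reach t' t) : t = t' := by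
  by_contra hne
  obtain ⟨l₁, l₂, rfl⟩ := List.append_of_mem ht
  have hsub : (l₁ ++ t :: l₂).Sublist (l₁ ++ t :: t' :: t :: l₂) :=
    (((List.sublist_cons_self t l₂).cons t').cons_cons t).append_left l₁
  have hlen := congrArg List.length (hl.2 _ (chain_detour hl.1 hne h h') hsub)
  simp only [List.length_append, List.length_cons] at hlen
  omega

theorem taskAcyclic_iff_forall_exists_critPath_mem :
    G.TaskAcyclic ↔ ∀ t, ∃ l, G.critPath l ∧ t ∈ l := by
  constructor
  · intro hG t
    obtain ⟨l, hl, hs⟩ := hG.exists_critPath_sublist (List.isChain_singleton t)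
    exact ⟨l, hl, List.singleton_sublist.1 hs⟩
  · intro hcover t t' h h'
    obtain ⟨l, hl, ht⟩ := hcover t
    exact hl.eq_of_reach_of_reach ht h h'

theorem TaskAcyclic.of_critPath_imp (hG : G.TaskAcyclic)
    (hcrit : ∀ l, G.critPath l → H.critPath l) : H.TaskAcyclic :=
  taskAcyclic_iff_forall_exists_critPath_mem.2 fun t =>
    let ⟨l, hl, ht⟩ := taskAcyclic_iff_forall_exists_critPath_mem.1 hG t
    ⟨l, hcrit l hl, ht⟩

theorem TaskAcyclic.reach_of_critPath_imp (hG : G.TaskAcyclic)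
    (hcrit : ∀ l, G.critPath l → H.critPath l) {t t' : T} (hne : t ≠ t')
    (h : G.reach t t') : H.reach t t' := by
  obtain ⟨l, hl, hs⟩ := hG.exists_critPath_sublist (List.isChain_pair.2 ⟨hne, h⟩)
  have hpw := (hG.of_critPath_imp hcrit).pairwise_of_chain (hcrit l hl).1
  exact (List.pairwise_pair.1 (hpw.sublist hs)).2

theorem chain_congr (hreach : ∀ t t', t ≠ t' → (G.reach t t' ↔ H.reach t t')) (l : List T) :
    G.chain l ↔ H.chain l :=
  List.IsChain.iff fun t t' => and_congr_right (hreach t t')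

theorem critPath_congr (hreach : ∀ t t', t ≠ t' → (G.reach t t' ↔ H.reach t t'))
    (l : List T) : G.critPath l ↔ H.critPath l := by
  simp only [critPath, chain_congr hreach]

end AOE

theorem stmt0_general {V W T : Type} {G : AOE V T} (H : AOE W T) (hG : G.TaskAcyclic) :
    (∀ t t' : T, t ≠ t' → (G.reach t t' ↔ H.reach t t')) ↔
      ∀ l : List T, G.critPath l ↔ H.critPath l := by
  refine ⟨AOE.critPath_congr, fun hcrit t t' hne => ⟨?_, ?_⟩⟩
  · exact hG.reach_of_critPath_imp (fun l => (hcrit l).1) hne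
  · have hH : H.TaskAcyclic := hG.of_critPath_imp fun l => (hcrit l).1
    exact hH.reach_of_critPath_imp (fun l => (hcrit l).2) hne

/-- Two AOEs with the same set of tasks have the same reachability
relation on their tasks iff they have the same set of potential critical paths. -/
theorem stmt0 {V W T : Type} [Fintype T] (G : AOE V T) (H : AOE W T)
    (hG : G.Acyclic) (hH : H.Acyclic) :
    (∀ t t' : T, t ≠ t' → (G.reach t t' ↔ H.reach t t')) ↔
      ∀ l : List T, G.critPath l ↔ H.critPath l :=
  stmt0_general H hG.taskAcyclic

end AOEPaper
end

section
/- Let G be a directed acyclic multigraph with task-labeled and unlabeled edges, and let G' be obtained from G by one application of Rule 1, Rule 2, or Rule 3 of the simplification algorithm. Then G' is acyclic. Consequently, every intermediate graph obtained from an acyclic input by applying rules of the algorithm is acyclic. -/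
namespace AOEPaper

/-!
If `t` is a strict order and `S` an antichain, then identifying the points of `S` creates no
cycle: a walk in the quotient lifts to a walk that may jump between points of `S`, and after one
jump it can never return to `S`, so allowing a single jump already gives a strict order.

Applied to reachability in an acyclic graph, this says that two vertices may be merged as soon as
neither reaches the other. Under Rule 1, a path from `u` to `v` would, since the two vertices have
the same outgoing (or incoming) neighbors, turn into a cycle. Under Rule 3, once the edge `(u, v)`
is deleted, condition (i) excludes a path from `u` to `v`, and a path from `v` to `u` would close a
cycle with that edge.
-/

section Gluing

variable {α β : Type*} {t : α → α → Prop} {S : Set α} {f : α → β} {a b c d : α}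

/-- The relation `t` with at most one jump inside `S` allowed: `t a b` holds, or `a` is related to
some point of `S` and some, possibly different, point of `S` is related to `b`. For a strict
order `t` and an antichain `S`, its image is the order obtained by identifying the points of `S`. -/
def RelVia (t : α → α → Prop) (S : Set α) (a b : α) : Prop :=
  t a b ∨ (∃ c ∈ S, t a c) ∧ ∃ d ∈ S, t d b

theorem RelVia.trans [IsTrans α t] (hab : RelVia t S a b) (hbc : RelVia t S b c) :
    RelVia t S a c := by
  rcases hab with hab | ⟨haS, e, he, heb⟩ <;> rcases hbc with hbc | ⟨⟨g, hg, hbg⟩, hSc⟩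
  · exact .inl (trans_of t hab hbc)
  · exact .inr ⟨⟨g, hg, trans_of t hab hbg⟩, hSc⟩
  · exact .inr ⟨haS, e, he, trans_of t heb hbc⟩
  · exact .inr ⟨haS, hSc⟩

section Irrefl

variable [Std.Irrefl t]

theorem not_rel_of_isAntichain (hS : IsAntichain t S) (ha : a ∈ S) (hb : b ∈ S) : ¬ t a b :=
  fun hab => irrefl_of t b (hS.eq ha hb hab ▸ hab)

theorem RelVia.rel_of_mem_left (hS : IsAntichain t S) (ha : a ∈ S) (hab : RelVia t S a b) :
    t a b :=
  hab.resolve_right fun ⟨⟨_, hc, hac⟩, _⟩ => not_rel_of_isAntichain hS ha hc hac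

theorem RelVia.rel_of_mem_right (hS : IsAntichain t S) (hb : b ∈ S) (hab : RelVia t S a b) :
    t a b :=
  hab.resolve_right fun ⟨_, _, hd, hdb⟩ => not_rel_of_isAntichain hS hd hb hdb

theorem RelVia.trans_of_mem (hS : IsAntichain t S) (hb : b ∈ S) (hc : c ∈ S) (hab : RelVia t S a b)
    (hcd : RelVia t S c d) : RelVia t S a d :=
  .inr ⟨⟨b, hb, hab.rel_of_mem_right hS hb⟩, c, hc, hcd.rel_of_mem_left hS hc⟩

theorem not_relVia_of_mem (hS : IsAntichain t S) (ha : a ∈ S) (hb : b ∈ S) : ¬ RelVia t S a b :=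
  fun hab => not_rel_of_isAntichain hS ha hb (hab.rel_of_mem_left hS ha)

end Irrefl

variable [IsStrictOrder α t]

theorem not_relVia_self (hS : IsAntichain t S) (a : α) : ¬ RelVia t S a a := by
  rintro (haa | ⟨⟨c, hc, hac⟩, d, hd, hda⟩)
  · exact irrefl_of t a haa
  · exact not_rel_of_isAntichain hS hd hc (trans_of t hda hac)

theorem isStrictOrder_map_relVia (hS : IsAntichain t S)
    (hf : ∀ a b, f a = f b → a = b ∨ a ∈ S ∧ b ∈ S) :
    IsStrictOrder β (Relation.Map (RelVia t S) f f) where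
  irrefl := by
    rintro x ⟨a, b, hab, hax, hbx⟩
    rcases hf a b (hax.trans hbx.symm) with rfl | ⟨ha, hb⟩
    · exact not_relVia_self hS a hab
    · exact not_relVia_of_mem hS ha hb hab
  trans := by
    rintro x y z ⟨a, b, hab, hax, hby⟩ ⟨c, d, hcd, hcy, hdz⟩
    rcases hf b c (hby.trans hcy.symm) with rfl | ⟨hb, hc⟩
    · exact ⟨a, d, hab.trans hcd, hax, hdz⟩
    · exact ⟨a, d, hab.trans_of_mem hS hb hc hcd, hax, hdz⟩

theorem irrefl_transGen_map (hS : IsAntichain t S)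
    (hf : ∀ a b, f a = f b → a = b ∨ a ∈ S ∧ b ∈ S) :
    Std.Irrefl (Relation.TransGen (Relation.Map t f f)) := by
  have := isStrictOrder_map_relVia hS hf
  have hle : Relation.TransGen (Relation.Map t f f) ≤ Relation.Map (RelVia t S) f f :=
    Relation.transGen_minimal (Relation.map_mono fun _ _ => .inl)
  exact ⟨fun x hx => irrefl_of (Relation.Map (RelVia t S) f f) x (hle x x hx)⟩

end Gluing

section TransGen

variable {α : Type*} {r : α → α → Prop} {a b : α}

theorem not_transGen_of_forall_left_imp (hb : ¬ Relation.TransGen r b b)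
    (h : ∀ c, r a c → r b c) : ¬ Relation.TransGen r a b := by
  rw [Relation.TransGen.head'_iff]
  rintro ⟨c, hac, hcb⟩
  exact hb (.head' (h c hac) hcb)

theorem not_transGen_of_forall_right_imp (ha : ¬ Relation.TransGen r a a)
    (h : ∀ c, r c b → r c a) : ¬ Relation.TransGen r a b := by
  rw [Relation.TransGen.tail'_iff]
  rintro ⟨c, hac, hcb⟩
  exact ha (.tail' hac (h c hcb))

end TransGen

section Graph

variable {V T : Type} {G : AOE V T} {u v : V}

theorem AOE.Acyclic.mono {T' : Type} {H : AOE V T'} (hG : G.Acyclic) (hle : H.adj ≤ G.adj) :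
    H.Acyclic :=
  fun x hx => hG x (Relation.TransGen.mono hle x x hx)

variable [DecidableEq V]

theorem eq_or_mem_pair_of_mergeV_eq {a b : V} (h : mergeV u v a = mergeV u v b) :
    a = b ∨ a ∈ ({u, v} : Set V) ∧ b ∈ ({u, v} : Set V) := by
  simp only [mergeV, Set.mem_insert_iff, Set.mem_singleton_iff] at h ⊢
  grind

theorem AOE.adj_merge_le (G : AOE V T) (u v : V) :
    (G.merge u v).adj ≤ Relation.Map G.adj (mergeV u v) (mergeV u v) := by
  rintro x y (hxy | ⟨t, rfl, rfl⟩)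
  · obtain ⟨⟨a, b⟩, hab, hxy⟩ := Multiset.mem_map.mp hxy
    obtain ⟨rfl, rfl⟩ := Prod.mk.inj hxy
    exact ⟨a, b, .inl hab, rfl, rfl⟩
  · exact ⟨G.St t, G.En t, .inr ⟨t, rfl, rfl⟩, rfl, rfl⟩

theorem AOE.adj_delUnl_le (G : AOE V T) (u v : V) : (G.delUnl u v).adj ≤ G.adj :=
  fun _ _ => Or.imp_left Multiset.mem_of_mem_erase

theorem AOE.Acyclic.delUnl (hG : G.Acyclic) (u v : V) : (G.delUnl u v).Acyclic :=
  hG.mono (G.adj_delUnl_le u v)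

theorem AOE.Acyclic.merge (hG : G.Acyclic) (huv : ¬ Relation.TransGen G.adj u v)
    (hvu : ¬ Relation.TransGen G.adj v u) : (G.merge u v).Acyclic := by
  have : IsStrictOrder V (Relation.TransGen G.adj) := { irrefl := hG }
  have hpair : IsAntichain (Relation.TransGen G.adj) {u, v} :=
    Set.pairwise_pair.mpr fun _ => ⟨huv, hvu⟩
  have hle : (G.merge u v).adj ≤
      Relation.Map (Relation.TransGen G.adj) (mergeV u v) (mergeV u v) :=
    (G.adj_merge_le u v).trans (Relation.map_mono fun _ _ => .single)
  have hirrefl := irrefl_transGen_map hpair fun _ _ => eq_or_mem_pair_of_mergeV_eq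
  exact fun x hx => hirrefl.irrefl x (Relation.TransGen.mono hle x x hx)

theorem AOE.Acyclic.merge_of_rule1OutCond (hG : G.Acyclic) (h : Rule1OutCond G u v) :
    (G.merge u v).Acyclic := by
  obtain ⟨-, -, -, -, -, hout⟩ := h
  exact hG.merge (not_transGen_of_forall_left_imp (hG v) fun w => (hout w).mp)
    (not_transGen_of_forall_left_imp (hG u) fun w => (hout w).mpr)

theorem AOE.Acyclic.merge_of_rule1InCond (hG : G.Acyclic) (h : Rule1InCond G u v) :
    (G.merge u v).Acyclic := by
  obtain ⟨-, -, -, -, -, hin⟩ := h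
  exact hG.merge (not_transGen_of_forall_right_imp (hG u) fun w => (hin w).mpr)
    (not_transGen_of_forall_right_imp (hG v) fun w => (hin w).mp)

theorem AOE.Acyclic.contract (hG : G.Acyclic) (huv : (u, v) ∈ G.unl)
    (hno : ¬ Relation.TransGen (G.delUnl u v).adj u v) : ((G.delUnl u v).merge u v).Acyclic := by
  refine (hG.delUnl u v).merge hno fun hvu => ?_
  have hvu' : Relation.TransGen G.adj v u := Relation.TransGen.mono (G.adj_delUnl_le u v) v u hvu
  exact hG u (.head (.inl huv) hvu')

theorem AOE.Acyclic.step {H : AOE V T} (hG : G.Acyclic) (h : Step G H) : H.Acyclic := by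
  cases h with
  | rule1out u v h => exact hG.merge_of_rule1OutCond h
  | rule1in u v h => exact hG.merge_of_rule1InCond h
  | rule2 u v _ => exact hG.delUnl u v
  | rule3 u v h =>
    obtain ⟨huv, hno, -⟩ := h
    exact hG.contract huv hno

end Graph

/-- One application of Rule 1, 2 or 3 to an acyclic graph yields an acyclic
graph; consequently every intermediate graph obtained from an acyclic input by applying
rules of the algorithm is acyclic. -/
theorem stmt5 {V T : Type} [DecidableEq V] (G : AOE V T) (hG : G.Acyclic) :
    (∀ G' : AOE V T, Step G G' → G'.Acyclic) ∧
      ∀ H : AOE V T, Relation.ReflTransGen Step G H → H.Acyclic := by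
  refine ⟨fun G' h => hG.step h, fun H h => ?_⟩
  induction h with
  | refl => exact hG
  | tail _ hstep hacyclic => exact hacyclic.step hstep

end AOEPaper
end

section
/- Given a canonical AOE G, the simplification algorithm produces the same output regardless of the order in which the rules are applied: if 𝒜₁ and 𝒜₂ are both obtained from G by (possibly different) sequences of applications of Rules 1, 2, 3 such that no rule applies to either result, then 𝒜₁ and 𝒜₂ are identical as AOE graphs (isomorphic via a bijection that preserves task labels, identifies each task's start and end vertices, and matches the unlabeled edges). -/
/-!
Say that one task precedes another if there is a path from the end of the first to the start of the
second; the global source counts as the end of a task, and the global sink as the start of one. The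
rules preserve this precedence relation. An AOE to which no rule applies is determined by it:
otherwise two start vertices with the same predecessors could be merged by Rule 1 or Rule 3, an end
vertex and a start vertex could be merged by Rule 3 whenever this adds no precedence, and, Rule 2
being exhausted, the unlabeled edges are the covering pairs of the reachability order that are not
joined by a task. So two outputs of the same canonical AOE are isomorphic.
-/

namespace AOEPaper

section

open Relation

variable {V W T : Type}

theorem AOE.mem_verts_of_adj {A : AOE V T} {a b : V} (h : A.adj a b) :
    a ∈ A.verts ∧ b ∈ A.verts := by
  rcases h with h | ⟨t, rfl, rfl⟩
  · exact A.unlMem _ h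
  · exact ⟨A.stMem t, A.enMem t⟩

theorem AOE.Acyclic.reach_antisymm {A : AOE V T} (hA : A.Acyclic) {a b : V}
    (hab : ReflTransGen A.adj a b) (hba : ReflTransGen A.adj b a) : a = b := by
  rcases reflTransGen_iff_eq_or_transGen.1 hab with h | h
  · exact h.symm
  · exact (hA a (h.trans_left hba)).elim

theorem AOE.Acyclic.ne_of_adj {A : AOE V T} (hA : A.Acyclic) {a b : V} (h : A.adj a b) :
    a ≠ b := by
  rintro rfl
  exact hA a (.single h)

/-! ### Reversal -/

/-- The AOE with all edges reversed; it turns statements about outgoing edges, start vertices and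
the sink into statements about incoming edges, end vertices and the source. -/
def AOE.rev (A : AOE V T) : AOE V T where
  verts := A.verts
  St := A.En
  En := A.St
  stMem := A.enMem
  enMem := A.stMem
  unl := A.unl.map Prod.swap
  unlMem := by
    intro e he
    obtain ⟨a, ha, rfl⟩ := Multiset.mem_map.1 he
    exact (A.unlMem a ha).symm

theorem AOE.mem_rev_unl {A : AOE V T} {a b : V} : (a, b) ∈ A.rev.unl ↔ (b, a) ∈ A.unl := by
  simp [AOE.rev]

theorem AOE.adj_rev (A : AOE V T) : A.rev.adj = Function.swap A.adj := by
  ext a b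
  exact or_congr AOE.mem_rev_unl (exists_congr fun _ => and_comm)

theorem AOE.transGen_rev {A : AOE V T} {a b : V} :
    TransGen A.rev.adj a b ↔ TransGen A.adj b a := by
  rw [AOE.adj_rev, transGen_swap]

theorem AOE.reach_rev {A : AOE V T} {a b : V} :
    ReflTransGen A.rev.adj a b ↔ ReflTransGen A.adj b a := by
  rw [AOE.adj_rev, reflTransGen_swap]

theorem AOE.rev_rev (A : AOE V T) : A.rev.rev = A := by
  simp [AOE.rev, Multiset.map_map]

theorem AOE.rev_merge [DecidableEq V] (A : AOE V T) (u v : V) :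
    (A.merge u v).rev = A.rev.merge u v := by
  simp [AOE.rev, AOE.merge, Multiset.map_map]

theorem AOE.rev_delUnl [DecidableEq V] (A : AOE V T) (u v : V) :
    (A.delUnl u v).rev = A.rev.delUnl v u := by
  simp only [AOE.rev, AOE.delUnl, AOE.mk.injEq, true_and]
  exact Multiset.map_erase _ Prod.swap_injective _ _

theorem AOE.Acyclic.rev {A : AOE V T} (hA : A.Acyclic) : A.rev.Acyclic :=
  fun x hx => hA x (AOE.transGen_rev.1 hx)

theorem Rule1OutCond.rev {A : AOE V T} {u v : V} (h : Rule1OutCond A u v) :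
    Rule1InCond A.rev u v := by
  rw [Rule1InCond, AOE.adj_rev]
  exact h

theorem Rule1InCond.rev {A : AOE V T} {u v : V} (h : Rule1InCond A u v) :
    Rule1OutCond A.rev u v := by
  rw [Rule1OutCond, AOE.adj_rev]
  exact h

theorem Rule2Cond.rev [DecidableEq V] {A : AOE V T} {u v : V} (h : Rule2Cond A u v) :
    Rule2Cond A.rev v u := by
  refine ⟨AOE.mem_rev_unl.2 h.1, ?_⟩
  rw [← AOE.rev_delUnl, AOE.transGen_rev]
  exact h.2

theorem Rule3Cond.rev [DecidableEq V] {A : AOE V T} {u v : V} (h : Rule3Cond A u v) :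
    Rule3Cond A.rev v u := by
  obtain ⟨huv, hpath, hst, hen, hreach⟩ := h
  refine ⟨AOE.mem_rev_unl.2 huv, ?_, fun ht => ?_, fun ht => ?_, fun w z hw hz => ?_⟩
  · rwa [← AOE.rev_delUnl, AOE.transGen_rev]
  · exact ⟨(hen ht).1, fun w hw => (hen ht).2 w (AOE.mem_rev_unl.1 hw)⟩
  · exact ⟨(hst ht).1, fun w hw => (hst ht).2 w (AOE.mem_rev_unl.1 hw)⟩
  · rw [AOE.adj_rev] at hw hz
    exact AOE.reach_rev.2 (hreach z w hz hw)

/-! ### Networks and their precedence relation -/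

/-- The start vertices of the tasks together with the sink `e`, which has label `none`. -/
def AOE.startPt (A : AOE V T) (e : V) (o : Option T) : V := o.elim e A.St

/-- The end vertices of the tasks together with the source `s`, which has label `none`. -/
def AOE.endPt (A : AOE V T) (s : V) (o : Option T) : V := o.elim s A.En

/-- All labeled vertices: `Sum.inl` for the start points and `Sum.inr` for the end points. -/
def AOE.point (A : AOE V T) (s e : V) : Option T ⊕ Option T → V :=
  Sum.elim (A.startPt e) (A.endPt s)

/-- The precedence relation of the tasks, including the source as an end point and the sink as a
start point. It is the invariant of the simplification rules. -/
def AOE.Precedes (A : AOE V T) (s e : V) (o o' : Option T) : Prop :=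
  ReflTransGen A.adj (A.endPt s o) (A.startPt e o')

/-- The structural properties of a canonical AOE with source `s` and sink `e` that survive the
simplification rules. In contrast to a canonical AOE, points with different labels may coincide. -/
structure AOE.IsNetwork (A : AOE V T) (s e : V) : Prop where
  acyclic : A.Acyclic
  source_mem : s ∈ A.verts
  sink_mem : e ∈ A.verts
  source_reach : ∀ x ∈ A.verts, ReflTransGen A.adj s x
  reach_sink : ∀ x ∈ A.verts, ReflTransGen A.adj x e
  exists_label : ∀ x ∈ A.verts, (∃ o, A.startPt e o = x) ∨ ∃ o, A.endPt s o = x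
  exists_label_of_mem_unl : ∀ a b, (a, b) ∈ A.unl →
    (∃ o, A.endPt s o = a) ∧ ∃ o, A.startPt e o = b

theorem AOE.mem_unl_of_adj_of_endPt_ne {A : AOE V T} {s w y : V}
    (hy : ∀ o, A.endPt s o ≠ y) (h : A.adj w y) : (w, y) ∈ A.unl :=
  h.resolve_right fun ⟨t, _, ht⟩ => hy (some t) ht

theorem AOE.mem_unl_of_adj_of_startPt_ne {A : AOE V T} {e x z : V}
    (hx : ∀ o, A.startPt e o ≠ x) (h : A.adj x z) : (x, z) ∈ A.unl :=
  h.resolve_right fun ⟨t, ht, _⟩ => hx (some t) ht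

theorem AOE.precedes_rev {A : AOE V T} {s e : V} {o o' : Option T} :
    A.rev.Precedes e s o o' ↔ A.Precedes s e o' o :=
  AOE.reach_rev

section Network

variable {A : AOE V T} {s e : V}

theorem AOE.IsNetwork.rev (hA : A.IsNetwork s e) : A.rev.IsNetwork e s where
  acyclic := hA.acyclic.rev
  source_mem := hA.sink_mem
  sink_mem := hA.source_mem
  source_reach x hx := AOE.reach_rev.2 (hA.reach_sink x hx)
  reach_sink x hx := AOE.reach_rev.2 (hA.source_reach x hx)
  exists_label x hx := (hA.exists_label x hx).symm
  exists_label_of_mem_unl a b hab := (hA.exists_label_of_mem_unl b a (AOE.mem_rev_unl.1 hab)).symm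

theorem AOE.IsNetwork.not_adj_source (hA : A.IsNetwork s e) (w : V) : ¬ A.adj w s :=
  fun h => hA.acyclic s (.tail' (hA.source_reach w (AOE.mem_verts_of_adj h).1) h)

theorem AOE.IsNetwork.not_sink_adj (hA : A.IsNetwork s e) (w : V) : ¬ A.adj e w :=
  fun h => hA.acyclic e (.head' h (hA.reach_sink w (AOE.mem_verts_of_adj h).2))

theorem AOE.IsNetwork.startPt_mem (hA : A.IsNetwork s e) (o : Option T) :
    A.startPt e o ∈ A.verts := by
  cases o with
  | none => exact hA.sink_mem
  | some t => exact A.stMem t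

theorem AOE.IsNetwork.endPt_mem (hA : A.IsNetwork s e) (o : Option T) :
    A.endPt s o ∈ A.verts :=
  hA.rev.startPt_mem o

theorem AOE.IsNetwork.range_point (hA : A.IsNetwork s e) :
    Set.range (A.point s e) = A.verts := by
  ext x
  constructor
  · rintro ⟨o | o, rfl⟩
    · exact hA.startPt_mem o
    · exact hA.endPt_mem o
  · intro hx
    rcases hA.exists_label x hx with ⟨o, rfl⟩ | ⟨o, rfl⟩
    · exact ⟨.inl o, rfl⟩
    · exact ⟨.inr o, rfl⟩

theorem AOE.IsNetwork.source_ne_of_adj_iff (hA : A.IsNetwork s e) {x y : V} (hy : y ∈ A.verts)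
    (hxy : x ≠ y) (hadj : ∀ w, A.adj w x ↔ A.adj w y) : s ≠ x := by
  rintro rfl
  obtain ⟨w, _, hw⟩ := (hA.source_reach y hy).cases_tail.resolve_left hxy.symm
  exact hA.not_adj_source w ((hadj w).2 hw)

end Network

/-! ### Canonical AOEs are networks -/

theorem AOE.Acyclic.reach_of_forall_ne_exists_adj {A : AOE V T} (hA : A.Acyclic) {s : V}
    (hs : ∀ x ∈ A.verts, x ≠ s → ∃ y, A.adj y x) :
    ∀ x ∈ A.verts, ReflTransGen A.adj s x := by
  have : IsStrictOrder V (TransGen A.adj) := { irrefl := hA, trans := fun _ _ _ => .trans }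
  have hwf : (A.verts : Set V).WellFoundedOn (TransGen A.adj) :=
    A.verts.finite_toSet.wellFoundedOn
  refine fun x hx => hwf.induction (P := ReflTransGen A.adj s) hx fun x hx ih => ?_
  by_cases hxs : x = s
  · rw [hxs]
  · obtain ⟨y, hy⟩ := hs x hx hxs
    exact (ih y (AOE.mem_verts_of_adj hy).1 (.single hy)).tail hy

theorem AOE.Acyclic.reach_of_source_edges {A : AOE V T} (hA : A.Acyclic) {s : V}
    (hs : ∀ x ∈ A.verts, x ≠ s → (∀ t, A.En t ≠ x) → (∀ a, (a, x) ∈ A.unl → a = s) →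
      (s, x) ∈ A.unl) :
    ∀ x ∈ A.verts, ReflTransGen A.adj s x := by
  refine hA.reach_of_forall_ne_exists_adj fun x hx hxs => ?_
  by_contra! hno
  exact hno s (.inl (hs x hx hxs (fun t ht => hno _ (.inr ⟨t, rfl, ht⟩))
    fun a ha => (hno a (.inl ha)).elim))

theorem Canonical.exists_isNetwork [DecidableEq V] [Fintype T] {G : AOE V T} (h : Canonical G) :
    ∃ s e, G.IsNetwork s e := by
  obtain ⟨hac, _, _, _, _, s, e, _, hs, he, _, hverts, hmid, hsource, hsink⟩ := h
  have hcases : ∀ x ∈ G.verts,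
      x = s ∨ x = e ∨ (∃ t, G.St t = x) ∨ ∃ t, G.En t = x := by
    simp [hverts]
  have hrev : ∀ x ∈ G.verts, ReflTransGen G.rev.adj e x :=
    hac.rev.reach_of_source_edges fun x hx hxe hSt hout => AOE.mem_rev_unl.2
      ((hsink x).2 ⟨hx, hxe, hSt, fun b hb => hout b (AOE.mem_rev_unl.2 hb)⟩)
  refine ⟨s, e, ⟨hac, hs, he, ?_, fun x hx => AOE.reach_rev.1 (hrev x hx), ?_, ?_⟩⟩
  · exact hac.reach_of_source_edges fun x hx hxs hEn hin => (hsource x).2 ⟨hx, hxs, hEn, hin⟩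
  · intro x hx
    rcases hcases x hx with rfl | rfl | ⟨t, ht⟩ | ⟨t, ht⟩
    · exact .inr ⟨none, rfl⟩
    · exact .inl ⟨none, rfl⟩
    · exact .inl ⟨some t, ht⟩
    · exact .inr ⟨some t, ht⟩
  · intro a b hab
    by_cases has : a = s <;> by_cases hbe : b = e
    · exact ⟨⟨none, has.symm⟩, ⟨none, hbe.symm⟩⟩
    · refine ⟨⟨none, has.symm⟩, ?_⟩
      obtain ⟨hb, hbs, hbEn, _⟩ := (hsource b).1 (has ▸ hab)
      rcases hcases b hb with h | h | ⟨t, h⟩ | ⟨t, h⟩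
      exacts [(hbs h).elim, (hbe h).elim, ⟨some t, h⟩, (hbEn t h).elim]
    · refine ⟨?_, ⟨none, hbe.symm⟩⟩
      obtain ⟨ha, hae, haSt, _⟩ := (hsink a).1 (hbe ▸ hab)
      rcases hcases a ha with h | h | ⟨t, h⟩ | ⟨t, h⟩
      exacts [(has h).elim, (hae h).elim, (haSt t h).elim, ⟨some t, h⟩]
    · obtain ⟨⟨t, ht⟩, ⟨t', ht'⟩⟩ := hmid a b hab has hbe
      exact ⟨⟨some t, ht⟩, ⟨some t', ht'⟩⟩

/-! ### Collapsing maps -/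

/-- `B` is the image of `A` under the vertex map `f`, except that edges of `A` may be missing in
`B` if their end points are still joined by a path. All simplification rules are of this form. -/
structure AOE.Collapses (A : AOE V T) (B : AOE W T) (f : V → W) : Prop where
  image_verts : f '' A.verts = B.verts
  map_St : ∀ t, f (A.St t) = B.St t
  map_En : ∀ t, f (A.En t) = B.En t
  exists_of_mem_unl : ∀ x y, (x, y) ∈ B.unl → ∃ p q, (p, q) ∈ A.unl ∧ f p = x ∧ f q = y
  reach_of_adj : ∀ p q, A.adj p q → ReflTransGen B.adj (f p) (f q)

section Collapse

variable {A : AOE V T} {B : AOE W T} {f : V → W} {s e : V}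

theorem AOE.Collapses.map_startPt (hf : A.Collapses B f) (o : Option T) :
    f (A.startPt e o) = B.startPt (f e) o := by
  cases o with
  | none => rfl
  | some t => exact hf.map_St t

theorem AOE.Collapses.map_endPt (hf : A.Collapses B f) (o : Option T) :
    f (A.endPt s o) = B.endPt (f s) o := by
  cases o with
  | none => rfl
  | some t => exact hf.map_En t

theorem AOE.Collapses.reach (hf : A.Collapses B f) {x y : V} (h : ReflTransGen A.adj x y) :
    ReflTransGen B.adj (f x) (f y) :=
  ReflTransGen.lift' f hf.reach_of_adj _ _ h

theorem AOE.Collapses.isNetwork (hf : A.Collapses B f) (hA : A.IsNetwork s e)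
    (hB : B.Acyclic) : B.IsNetwork (f s) (f e) := by
  have hmem : ∀ x ∈ A.verts, f x ∈ B.verts := fun x hx =>
    Finset.mem_coe.1 (hf.image_verts ▸ Set.mem_image_of_mem f hx)
  have hsurj : ∀ y ∈ B.verts, ∃ x ∈ A.verts, f x = y := fun y hy => by
    rwa [← Finset.mem_coe, ← hf.image_verts] at hy
  refine ⟨hB, hmem s hA.source_mem, hmem e hA.sink_mem, fun y hy => ?_, fun y hy => ?_,
    fun y hy => ?_, fun a b hab => ?_⟩
  · obtain ⟨x, hx, rfl⟩ := hsurj y hy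
    exact hf.reach (hA.source_reach x hx)
  · obtain ⟨x, hx, rfl⟩ := hsurj y hy
    exact hf.reach (hA.reach_sink x hx)
  · obtain ⟨x, hx, rfl⟩ := hsurj y hy
    rcases hA.exists_label x hx with ⟨o, rfl⟩ | ⟨o, rfl⟩
    · exact .inl ⟨o, (hf.map_startPt o).symm⟩
    · exact .inr ⟨o, (hf.map_endPt o).symm⟩
  · obtain ⟨p, q, hpq, rfl, rfl⟩ := hf.exists_of_mem_unl a b hab
    obtain ⟨⟨o, rfl⟩, ⟨o', rfl⟩⟩ := hA.exists_label_of_mem_unl p q hpq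
    exact ⟨⟨o, (hf.map_endPt o).symm⟩, ⟨o', (hf.map_startPt o').symm⟩⟩

theorem AOE.Collapses.precedes_eq (hf : A.Collapses B f)
    (hreflect : ∀ o o', ReflTransGen B.adj (f (A.endPt s o)) (f (A.startPt e o')) →
      A.Precedes s e o o') :
    B.Precedes (f s) (f e) = A.Precedes s e := by
  ext o o'
  rw [AOE.Precedes, ← hf.map_endPt, ← hf.map_startPt]
  exact ⟨hreflect o o', hf.reach⟩

end Collapse

theorem exists_reflTransGen_of_map {r : V → V → Prop} {f : V → W}
    (hr : ∀ p q y, r p q → f q = f y → r p y) {c : W} {y : V}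
    (h : ReflTransGen (Relation.Map r f f) c (f y)) : ∃ a, f a = c ∧ ReflTransGen r a y := by
  induction h using ReflTransGen.head_induction_on with
  | refl => exact ⟨y, rfl, .refl⟩
  | head hstep _ ih =>
    obtain ⟨p, q, hpq, rfl, rfl⟩ := hstep
    obtain ⟨a, haq, hay⟩ := ih
    exact ⟨p, rfl, .head (hr p q a hpq haq.symm) hay⟩

theorem not_transGen_map_self {r : V → V → Prop} {f : V → W} (hacyclic : ∀ x, ¬ TransGen r x x)
    (hr : ∀ p q y, r p q → f q = f y → r p y) (c : W) :
    ¬ TransGen (Relation.Map r f f) c c := by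
  intro hc
  obtain ⟨_, hcp, p, q, hpq, rfl, rfl⟩ := TransGen.tail'_iff.1 hc
  obtain ⟨a, haq, hap⟩ := exists_reflTransGen_of_map hr hcp
  exact hacyclic a (.tail' hap (hr p q a hpq haq.symm))

section Rules

variable [DecidableEq V] {A : AOE V T} {s e u v : V}

/-! ### Merging vertices and deleting edges -/

theorem mergeV_left (u v : V) : mergeV u v u = u := ite_id _

theorem mergeV_right (u v : V) : mergeV u v v = u := if_pos rfl

theorem eq_or_of_mergeV_eq {a b : V} (h : mergeV u v a = mergeV u v b) :
    a = b ∨ (a = u ∧ b = v) ∨ (a = v ∧ b = u) := by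
  unfold mergeV at h
  split_ifs at h <;> simp_all

theorem AOE.adj_merge (A : AOE V T) (u v : V) :
    (A.merge u v).adj = Relation.Map A.adj (mergeV u v) (mergeV u v) := by
  ext c d
  constructor
  · rintro (h | ⟨t, hc, hd⟩)
    · obtain ⟨⟨p, q⟩, hpq, heq⟩ := Multiset.mem_map.1 h
      exact ⟨p, q, .inl hpq, congrArg Prod.fst heq, congrArg Prod.snd heq⟩
    · exact ⟨A.St t, A.En t, .inr ⟨t, rfl, rfl⟩, hc, hd⟩
  · rintro ⟨p, q, h | ⟨t, rfl, rfl⟩, rfl, rfl⟩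
    · exact .inl (Multiset.mem_map.2 ⟨(p, q), h, rfl⟩)
    · exact .inr ⟨t, rfl, rfl⟩

theorem AOE.collapses_merge (hu : u ∈ A.verts) : A.Collapses (A.merge u v) (mergeV u v) where
  image_verts := by
    ext x
    simp only [AOE.merge, Set.mem_image, Finset.coe_insert, Finset.coe_erase,
      Set.mem_insert_iff, Set.mem_sdiff, Finset.mem_coe, Set.mem_singleton_iff, mergeV]
    grind
  map_St _ := rfl
  map_En _ := rfl
  exists_of_mem_unl x y hxy := by
    obtain ⟨⟨p, q⟩, hpq, heq⟩ := Multiset.mem_map.1 hxy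
    exact ⟨p, q, hpq, congrArg Prod.fst heq, congrArg Prod.snd heq⟩
  reach_of_adj p q hpq := by
    rw [AOE.adj_merge]
    exact .single ⟨p, q, hpq, rfl, rfl⟩

theorem AOE.adj_of_delUnl_adj {a b : V} (h : (A.delUnl u v).adj a b) : A.adj a b :=
  h.imp_left Multiset.mem_of_mem_erase

theorem AOE.delUnl_adj_or_of_adj {a b : V} (h : A.adj a b) :
    (A.delUnl u v).adj a b ∨ (a = u ∧ b = v) := by
  by_cases hab : (a, b) = (u, v)
  · exact .inr (Prod.mk.inj hab)
  · exact .inl (h.imp_left (Multiset.mem_erase_of_ne hab).2)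

theorem AOE.transGen_delUnl_or {a b : V} (h : TransGen A.adj a b) :
    TransGen (A.delUnl u v).adj a b ∨ (ReflTransGen A.adj a u ∧ ReflTransGen A.adj v b) := by
  induction h with
  | single hab =>
    rcases AOE.delUnl_adj_or_of_adj (u := u) (v := v) hab with h | ⟨rfl, rfl⟩
    · exact .inl (.single h)
    · exact .inr ⟨.refl, .refl⟩
  | tail hab hbc ih =>
    rcases ih with h | ⟨hau, hvb⟩
    · rcases AOE.delUnl_adj_or_of_adj (u := u) (v := v) hbc with h' | ⟨rfl, rfl⟩
      · exact .inl (h.tail h')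
      · exact .inr ⟨hab.to_reflTransGen, .refl⟩
    · exact .inr ⟨hau, hvb.tail hbc⟩

theorem AOE.Acyclic.transGen_delUnl (hA : A.Acyclic) {z : V} (huz : TransGen A.adj u z)
    (hzv : TransGen A.adj z v) : TransGen (A.delUnl u v).adj u v := by
  have huz' : TransGen (A.delUnl u v).adj u z :=
    (AOE.transGen_delUnl_or huz).resolve_right fun h => hA z (hzv.trans_left h.2)
  have hzv' : TransGen (A.delUnl u v).adj z v :=
    (AOE.transGen_delUnl_or hzv).resolve_right fun h => hA u (huz.trans_left h.1)
  exact huz'.trans hzv'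

/-! ### The rules preserve networks and precedence -/

theorem Rule1InCond.adj_of_mergeV_eq (h : Rule1InCond A u v) {p q y : V} (hpq : A.adj p q)
    (hqy : mergeV u v q = mergeV u v y) : A.adj p y := by
  obtain ⟨-, -, -, -, -, hadj⟩ := h
  rcases eq_or_of_mergeV_eq hqy with rfl | ⟨rfl, rfl⟩ | ⟨rfl, rfl⟩
  · exact hpq
  · exact (hadj p).1 hpq
  · exact (hadj p).2 hpq

theorem Rule1InCond.eq_of_mergeV_endPt_eq (h : Rule1InCond A u v) (hA : A.IsNetwork s e)
    {o : Option T} {x : V} (hx : mergeV u v x = mergeV u v (A.endPt s o)) :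
    x = A.endPt s o := by
  obtain ⟨hu, hv, huv, hEnu, hEnv, hadj⟩ := h
  have hne_u : A.endPt s o ≠ u := by
    cases o with
    | none => exact hA.source_ne_of_adj_iff hv huv hadj
    | some t => exact hEnu t
  have hne_v : A.endPt s o ≠ v := by
    cases o with
    | none => exact hA.source_ne_of_adj_iff hu huv.symm fun w => (hadj w).symm
    | some t => exact hEnv t
  rcases eq_or_of_mergeV_eq hx with h | ⟨-, h⟩ | ⟨-, h⟩
  exacts [h, (hne_v h).elim, (hne_u h).elim]

theorem Rule1InCond.merge_preserves (h : Rule1InCond A u v) (hA : A.IsNetwork s e) :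
    (A.merge u v).IsNetwork (mergeV u v s) (mergeV u v e) ∧
      (A.merge u v).Precedes (mergeV u v s) (mergeV u v e) = A.Precedes s e := by
  have hlift : ∀ p q y, A.adj p q → mergeV u v q = mergeV u v y → A.adj p y :=
    fun _ _ _ => h.adj_of_mergeV_eq
  have hf : A.Collapses (A.merge u v) (mergeV u v) := AOE.collapses_merge h.1
  refine ⟨hf.isNetwork hA ?_, hf.precedes_eq fun o o' hp => ?_⟩
  · rw [AOE.Acyclic, AOE.adj_merge]
    exact not_transGen_map_self hA.acyclic hlift
  · rw [AOE.adj_merge] at hp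
    obtain ⟨a, ha, hao'⟩ := exists_reflTransGen_of_map hlift hp
    rwa [h.eq_of_mergeV_endPt_eq hA ha] at hao'

theorem Rule1OutCond.merge_preserves (h : Rule1OutCond A u v) (hA : A.IsNetwork s e) :
    (A.merge u v).IsNetwork (mergeV u v s) (mergeV u v e) ∧
      (A.merge u v).Precedes (mergeV u v s) (mergeV u v e) = A.Precedes s e := by
  obtain ⟨hnet, hprec⟩ := h.rev.merge_preserves hA.rev
  rw [← AOE.rev_merge] at hnet hprec
  refine ⟨AOE.rev_rev (A.merge u v) ▸ hnet.rev, ?_⟩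
  ext o o'
  rw [← AOE.precedes_rev, hprec, AOE.precedes_rev]

theorem Rule2Cond.collapses_delUnl (h : Rule2Cond A u v) : A.Collapses (A.delUnl u v) id where
  image_verts := Set.image_id _
  map_St _ := rfl
  map_En _ := rfl
  exists_of_mem_unl x y hxy := ⟨x, y, Multiset.mem_of_mem_erase hxy, rfl, rfl⟩
  reach_of_adj p q hpq := by
    rcases AOE.delUnl_adj_or_of_adj (u := u) (v := v) hpq with h' | ⟨rfl, rfl⟩
    · exact .single h'
    · exact h.2.to_reflTransGen

theorem Rule2Cond.delUnl_preserves (h : Rule2Cond A u v) (hA : A.IsNetwork s e) :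
    (A.delUnl u v).IsNetwork s e ∧ (A.delUnl u v).Precedes s e = A.Precedes s e := by
  have hle : (A.delUnl u v).adj ≤ A.adj := fun _ _ => AOE.adj_of_delUnl_adj
  have hf := h.collapses_delUnl
  exact ⟨hf.isNetwork hA fun x hx => hA.acyclic x (TransGen.mono hle _ _ hx),
    hf.precedes_eq fun _ _ hp => ReflTransGen.mono hle _ _ hp⟩

theorem Rule3Cond.adj (h : Rule3Cond A u v) : A.adj u v := .inl h.1

theorem Rule3Cond.not_delUnl_adj (h : Rule3Cond A u v) : ¬ (A.delUnl u v).adj u v :=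
  fun huv => h.2.1 (.single huv)

theorem Rule3Cond.collapses_merge (h : Rule3Cond A u v) :
    A.Collapses ((A.delUnl u v).merge u v) (mergeV u v) := by
  have hf : (A.delUnl u v).Collapses ((A.delUnl u v).merge u v) (mergeV u v) :=
    AOE.collapses_merge (A.unlMem _ h.1).1
  refine ⟨hf.image_verts, hf.map_St, hf.map_En, fun x y hxy => ?_, fun p q hpq => ?_⟩
  · obtain ⟨p, q, hpq, hx, hy⟩ := hf.exists_of_mem_unl x y hxy
    exact ⟨p, q, Multiset.mem_of_mem_erase hpq, hx, hy⟩
  · rcases AOE.delUnl_adj_or_of_adj (u := u) (v := v) hpq with hpq | ⟨rfl, rfl⟩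
    · exact hf.reach_of_adj p q hpq
    · rw [mergeV_left, mergeV_right]

-- A step from `b` to `p` inside the merged vertex is either trivial, or the contracted edge
-- `(u, v)`, or runs from `v` to `u` and is bypassed by condition (iv) of Rule 3.
theorem Rule3Cond.transGen_extend (h : Rule3Cond A u v) (hA : A.Acyclic) {a b p q : V}
    (hab : TransGen A.adj a b) (hbp : mergeV u v b = mergeV u v p)
    (hpq : (A.delUnl u v).adj p q) : TransGen A.adj a q ∧ ¬ (a = u ∧ q = v) := by
  have hpq' : A.adj p q := AOE.adj_of_delUnl_adj hpq
  rcases eq_or_of_mergeV_eq hbp with rfl | ⟨rfl, rfl⟩ | ⟨rfl, rfl⟩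
  · refine ⟨hab.tail hpq', ?_⟩
    rintro ⟨rfl, rfl⟩
    exact h.2.1 (hA.transGen_delUnl hab (.single hpq'))
  · refine ⟨(hab.tail h.adj).tail hpq', ?_⟩
    rintro ⟨rfl, -⟩
    exact hA a hab
  · obtain ⟨w, haw, hwv⟩ := TransGen.tail'_iff.1 hab
    have hne : w ≠ q := by
      rintro rfl
      exact h.2.1 (hA.transGen_delUnl (.single hpq') (.single hwv))
    have hwq : ReflTransGen A.adj w q := h.2.2.2.2 w q hwv hpq'
    refine ⟨.trans_right haw
      ((reflTransGen_iff_eq_or_transGen.1 hwq).resolve_left hne.symm), ?_⟩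
    rintro ⟨rfl, rfl⟩
    exact h.not_delUnl_adj hpq

theorem Rule3Cond.exists_transGen_of_merge (h : Rule3Cond A u v) (hA : A.Acyclic) {c d : V}
    (hcd : TransGen ((A.delUnl u v).merge u v).adj c d) :
    ∃ a b, mergeV u v a = c ∧ mergeV u v b = d ∧ TransGen A.adj a b ∧ ¬ (a = u ∧ b = v) := by
  rw [AOE.adj_merge] at hcd
  induction hcd with
  | single hstep =>
    obtain ⟨p, q, hpq, rfl, rfl⟩ := hstep
    refine ⟨p, q, rfl, rfl, .single (AOE.adj_of_delUnl_adj hpq), ?_⟩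
    rintro ⟨rfl, rfl⟩
    exact h.not_delUnl_adj hpq
  | tail _ hstep ih =>
    obtain ⟨p, q, hpq, hp, rfl⟩ := hstep
    obtain ⟨a, b, rfl, hb, hab, -⟩ := ih
    exact ⟨a, q, rfl, rfl, h.transGen_extend hA hab (hb.trans hp.symm) hpq⟩

theorem Rule3Cond.acyclic_merge (h : Rule3Cond A u v) (hA : A.Acyclic) :
    ((A.delUnl u v).merge u v).Acyclic := by
  intro c hc
  obtain ⟨a, b, ha, hb, hab, hne⟩ := h.exists_transGen_of_merge hA hc
  rcases eq_or_of_mergeV_eq (ha.trans hb.symm) with rfl | hab' | ⟨rfl, rfl⟩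
  · exact hA a hab
  · exact hne hab'
  · exact hA a (hab.tail h.adj)

theorem Rule3Cond.eq_of_adj_of_endPt_eq (h : Rule3Cond A u v) (hA : A.IsNetwork s e)
    {o : Option T} (ho : A.endPt s o = v) {z : V} (hz : A.adj u z) : z = v := by
  cases o with
  | none =>
    obtain rfl : s = v := ho
    exact (hA.not_adj_source u h.adj).elim
  | some t =>
    obtain ⟨hSt, hunl⟩ := h.2.2.2.1 ⟨t, ho⟩
    exact hunl z (hz.resolve_right fun ⟨t', ht', _⟩ => hSt t' ht')

theorem Rule3Cond.eq_of_adj_of_startPt_eq (h : Rule3Cond A u v) (hA : A.IsNetwork s e)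
    {o : Option T} (ho : A.startPt e o = u) {w : V} (hw : A.adj w v) : w = u :=
  h.rev.eq_of_adj_of_endPt_eq hA.rev ho (by rwa [AOE.adj_rev])

theorem Rule3Cond.startPt_ne_of_endPt_eq (h : Rule3Cond A u v) (hA : A.IsNetwork s e)
    {o o' : Option T} (ho : A.endPt s o = v) : A.startPt e o' ≠ u := by
  rintro ho'
  cases o' with
  | none =>
    obtain rfl : e = u := ho'
    exact hA.not_sink_adj v h.adj
  | some t =>
    have hEn : A.En t = v := h.eq_of_adj_of_endPt_eq hA ho (.inr ⟨t, ho', rfl⟩)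
    exact h.not_delUnl_adj (.inr ⟨t, ho', hEn⟩)

theorem Rule3Cond.reach_of_transGen_of_mergeV_endPt_eq (h : Rule3Cond A u v)
    (hA : A.IsNetwork s e) {o : Option T} {a b : V} (hab : TransGen A.adj a b)
    (ha : mergeV u v a = mergeV u v (A.endPt s o)) : ReflTransGen A.adj (A.endPt s o) b := by
  rcases eq_or_of_mergeV_eq ha with rfl | ⟨rfl, hv⟩ | ⟨rfl, hu⟩
  · exact hab.to_reflTransGen
  · obtain ⟨z, hz, hzb⟩ := TransGen.head'_iff.1 hab
    rwa [hv, ← h.eq_of_adj_of_endPt_eq hA hv hz]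
  · rw [hu]
    exact .head h.adj hab.to_reflTransGen

theorem Rule3Cond.precedes_of_reach_merge (h : Rule3Cond A u v) (hA : A.IsNetwork s e)
    {o o' : Option T} (hp : ReflTransGen ((A.delUnl u v).merge u v).adj
      (mergeV u v (A.endPt s o)) (mergeV u v (A.startPt e o'))) : A.Precedes s e o o' := by
  rw [AOE.Precedes]
  rcases reflTransGen_iff_eq_or_transGen.1 hp with hp | hp
  · rcases eq_or_of_mergeV_eq hp with heq | ⟨hu, hv⟩ | ⟨hv, hu⟩
    · rw [heq]
    · exact (h.startPt_ne_of_endPt_eq hA hv hu).elim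
    · rw [hv, hu]
      exact .single h.adj
  · obtain ⟨a, b, ha, hb, hab, -⟩ := h.exists_transGen_of_merge hA.acyclic hp
    have hob : ReflTransGen A.adj (A.endPt s o) b :=
      h.reach_of_transGen_of_mergeV_endPt_eq hA hab ha
    rcases eq_or_of_mergeV_eq hb with rfl | ⟨rfl, hv⟩ | ⟨rfl, hu⟩
    · exact hob
    · rw [hv]
      exact hob.tail h.adj
    · have hne : b ≠ A.endPt s o := fun heq => h.startPt_ne_of_endPt_eq hA heq.symm hu
      obtain ⟨w, how, hw⟩ := hob.cases_tail.resolve_left hne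
      rwa [hu, ← h.eq_of_adj_of_startPt_eq hA hu hw]

theorem Rule3Cond.merge_preserves (h : Rule3Cond A u v) (hA : A.IsNetwork s e) :
    ((A.delUnl u v).merge u v).IsNetwork (mergeV u v s) (mergeV u v e) ∧
      ((A.delUnl u v).merge u v).Precedes (mergeV u v s) (mergeV u v e) = A.Precedes s e :=
  ⟨h.collapses_merge.isNetwork hA (h.acyclic_merge hA.acyclic),
    h.collapses_merge.precedes_eq fun _ _ => h.precedes_of_reach_merge hA⟩

theorem AOE.IsNetwork.exists_of_step {B : AOE V T} (hA : A.IsNetwork s e) (h : Step A B) :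
    ∃ s' e', B.IsNetwork s' e' ∧ B.Precedes s' e' = A.Precedes s e := by
  cases h with
  | rule1out u v h => exact ⟨_, _, h.merge_preserves hA⟩
  | rule1in u v h => exact ⟨_, _, h.merge_preserves hA⟩
  | rule2 u v h => exact ⟨_, _, h.delUnl_preserves hA⟩
  | rule3 u v h => exact ⟨_, _, h.merge_preserves hA⟩

theorem AOE.IsNetwork.exists_of_steps {B : AOE V T} (hA : A.IsNetwork s e)
    (h : ReflTransGen Step A B) :
    ∃ s' e', B.IsNetwork s' e' ∧ B.Precedes s' e' = A.Precedes s e := by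
  induction h with
  | refl => exact ⟨s, e, hA, rfl⟩
  | tail _ hstep ih =>
    obtain ⟨_, _, hB, hprec⟩ := ih
    obtain ⟨s', e', hC, hprec'⟩ := hB.exists_of_step hstep
    exact ⟨s', e', hC, hprec'.trans hprec⟩

/-! ### Irreducible networks -/

/-- An AOE to which none of the simplification rules applies. -/
def AOE.Irreducible (A : AOE V T) : Prop := ∀ B : AOE V T, ¬ Step A B

theorem AOE.Irreducible.not_rule1InCond (hA : A.Irreducible) : ¬ Rule1InCond A u v :=
  fun h => hA _ (.rule1in u v h)

theorem AOE.Irreducible.not_rule2Cond (hA : A.Irreducible) : ¬ Rule2Cond A u v :=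
  fun h => hA _ (.rule2 u v h)

theorem AOE.Irreducible.rev (hA : A.Irreducible) : A.rev.Irreducible := by
  intro B hB
  cases hB with
  | rule1out u v h => exact hA _ (.rule1in u v (A.rev_rev ▸ h.rev))
  | rule1in u v h => exact hA _ (.rule1out u v (A.rev_rev ▸ h.rev))
  | rule2 u v h => exact hA _ (.rule2 v u (A.rev_rev ▸ h.rev))
  | rule3 u v h => exact hA _ (.rule3 v u (A.rev_rev ▸ h.rev))

theorem AOE.Irreducible.false_of_mem_unl (hA : A.Irreducible) (huv : (u, v) ∈ A.unl)
    (hSt : (∃ t, A.St t = u) → (∀ t, A.En t ≠ v) ∧ ∀ w, (w, v) ∈ A.unl → w = u)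
    (hEn : (∃ t, A.En t = v) → (∀ t, A.St t ≠ u) ∧ ∀ w, (u, w) ∈ A.unl → w = v)
    (hreach : ∀ w z, A.adj w v → A.adj u z → ReflTransGen A.adj w z) : False :=
  hA _ (.rule3 u v ⟨huv, fun hp => hA.not_rule2Cond ⟨huv, hp⟩, hSt, hEn, hreach⟩)

theorem AOE.Irreducible.nodup_unl (hA : A.Irreducible) : A.unl.Nodup := by
  rw [Multiset.nodup_iff_count_le_one]
  rintro ⟨u, v⟩
  by_contra! hcount
  have hdel : (u, v) ∈ (A.delUnl u v).unl := by
    rw [← Multiset.count_pos, AOE.delUnl, Multiset.count_erase_self]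
    omega
  exact hA.not_rule2Cond ⟨Multiset.mem_of_mem_erase hdel, .single (.inl hdel)⟩

theorem AOE.Irreducible.eq_or_eq_of_mem_unl (hA : A.Irreducible) (hac : A.Acyclic)
    (huv : (u, v) ∈ A.unl) {z : V} (huz : ReflTransGen A.adj u z)
    (hzv : ReflTransGen A.adj z v) : z = u ∨ z = v := by
  rcases reflTransGen_iff_eq_or_transGen.1 huz with h | huz
  · exact .inl h
  · rcases reflTransGen_iff_eq_or_transGen.1 hzv with h | hzv
    · exact .inr h.symm
    · exact (hA.not_rule2Cond ⟨huv, hac.transGen_delUnl huz hzv⟩).elim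

theorem AOE.Irreducible.mem_unl_iff (hA : A.Irreducible) (hac : A.Acyclic) {x y : V} :
    (x, y) ∈ A.unl ↔ ReflTransGen A.adj x y ∧ x ≠ y ∧
      (∀ z ∈ (A.verts : Set V), ReflTransGen A.adj x z → ReflTransGen A.adj z y →
        z = x ∨ z = y) ∧
      ∀ t, ¬ (A.St t = x ∧ A.En t = y) := by
  constructor
  · intro h
    exact ⟨.single (.inl h), hac.ne_of_adj (.inl h), fun z _ => hA.eq_or_eq_of_mem_unl hac h,
      fun t ht => hA.not_rule2Cond ⟨h, .single (.inr ⟨t, ht⟩)⟩⟩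
  · rintro ⟨hxy, hne, hcover, htask⟩
    obtain ⟨z, hxz, hzy⟩ := hxy.cases_head.resolve_left hne
    rcases hcover z (AOE.mem_verts_of_adj hxz).2 (.single hxz) hzy with rfl | rfl
    · exact (hac.ne_of_adj hxz rfl).elim
    · exact hxz.resolve_right fun ⟨t, ht⟩ => htask t ht

theorem AOE.IsNetwork.exists_endPt_eq_of_reach_iff (hN : A.IsNetwork s e) (hA : A.Irreducible)
    {c : Option T} {y : V}
    (h : ∀ b, ReflTransGen A.adj (A.endPt s b) (A.endPt s c) ↔
      ReflTransGen A.adj (A.endPt s b) y) : ∃ c', A.endPt s c' = y := by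
  by_contra! hy
  have hcy : ReflTransGen A.adj (A.endPt s c) y := (h c).1 .refl
  have hpred : ∀ w, A.adj w y → w = A.endPt s c := by
    intro w hw
    have hwy : (w, y) ∈ A.unl := AOE.mem_unl_of_adj_of_endPt_ne hy hw
    obtain ⟨⟨b, rfl⟩, -⟩ := hN.exists_label_of_mem_unl w y hwy
    exact ((hA.eq_or_eq_of_mem_unl hN.acyclic hwy ((h b).2 (.single hw)) hcy).resolve_right
      (hy c)).symm
  obtain ⟨w, -, hw⟩ := hcy.cases_tail.resolve_left (hy c).symm
  obtain rfl := hpred w hw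
  refine hA.false_of_mem_unl (AOE.mem_unl_of_adj_of_endPt_ne hy hw) (fun _ => ?_)
    (fun ⟨t, ht⟩ => (hy (some t) ht).elim) fun w z hw hz => ?_
  · exact ⟨fun t => hy (some t), fun w hw => hpred w (.inl hw)⟩
  · rw [hpred w hw]
    exact .single hz

theorem AOE.IsNetwork.adj_of_reach_iff (hN : A.IsNetwork s e) (hA : A.Irreducible) {x y : V}
    (h : ∀ b, ReflTransGen A.adj (A.endPt s b) x ↔ ReflTransGen A.adj (A.endPt s b) y)
    (hx : ∀ o, A.endPt s o ≠ x) (hy : ∀ o, A.endPt s o ≠ y) {w : V} (hw : A.adj w x) :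
    A.adj w y := by
  have hwx : (w, x) ∈ A.unl := AOE.mem_unl_of_adj_of_endPt_ne hx hw
  obtain ⟨⟨b, rfl⟩, -⟩ := hN.exists_label_of_mem_unl w x hwx
  have hby : ReflTransGen A.adj (A.endPt s b) y := (h b).1 (.single hw)
  obtain ⟨w', hbw', hw'⟩ := hby.cases_tail.resolve_left (hy b).symm
  obtain ⟨⟨b', rfl⟩, -⟩ :=
    hN.exists_label_of_mem_unl w' y (AOE.mem_unl_of_adj_of_endPt_ne hy hw')
  rcases hA.eq_or_eq_of_mem_unl hN.acyclic hwx hbw' ((h b').2 (.single hw')) with heq | heq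
  · rwa [← heq]
  · exact (hx b' heq).elim

theorem AOE.IsNetwork.eq_of_endPt_reach_iff (hN : A.IsNetwork s e) (hA : A.Irreducible) {x y : V}
    (hx : x ∈ A.verts) (hy : y ∈ A.verts)
    (h : ∀ b, ReflTransGen A.adj (A.endPt s b) x ↔ ReflTransGen A.adj (A.endPt s b) y) :
    x = y := by
  have heq_of_endPt : ∀ c c', A.endPt s c = x → A.endPt s c' = y → x = y := by
    rintro c c' rfl rfl
    exact hN.acyclic.reach_antisymm ((h c).1 .refl) ((h c').2 .refl)
  by_cases hxEnd : ∃ c, A.endPt s c = x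
  · obtain ⟨c, rfl⟩ := hxEnd
    obtain ⟨c', hc'⟩ := hN.exists_endPt_eq_of_reach_iff hA h
    exact heq_of_endPt c c' rfl hc'
  by_cases hyEnd : ∃ c, A.endPt s c = y
  · obtain ⟨c', rfl⟩ := hyEnd
    obtain ⟨c, hc⟩ := hN.exists_endPt_eq_of_reach_iff hA fun b => (h b).symm
    exact heq_of_endPt c c' hc rfl
  push Not at hxEnd hyEnd
  by_contra hne
  exact hA.not_rule1InCond ⟨hx, hy, hne, fun t => hxEnd (some t), fun t => hyEnd (some t),
    fun w => ⟨hN.adj_of_reach_iff hA h hxEnd hyEnd,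
      hN.adj_of_reach_iff hA (fun b => (h b).symm) hyEnd hxEnd⟩⟩

theorem AOE.IsNetwork.eq_of_reach_startPt_iff (hN : A.IsNetwork s e) (hA : A.Irreducible)
    {x y : V} (hx : x ∈ A.verts) (hy : y ∈ A.verts)
    (h : ∀ a, ReflTransGen A.adj x (A.startPt e a) ↔ ReflTransGen A.adj y (A.startPt e a)) :
    x = y :=
  hN.rev.eq_of_endPt_reach_iff hA.rev hx hy fun a =>
    AOE.reach_rev.trans ((h a).trans AOE.reach_rev.symm)

theorem AOE.IsNetwork.eq_of_reach_of_forall_reach (hN : A.IsNetwork s e) (hA : A.Irreducible)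
    {x y : V} (hx : x ∈ A.verts) (hy : y ∈ A.verts) (hyx : ReflTransGen A.adj y x)
    (h : ∀ b a, ReflTransGen A.adj (A.endPt s b) x → ReflTransGen A.adj y (A.startPt e a) →
      A.Precedes s e b a) : x = y := by
  by_cases hxEnd : ∃ c, A.endPt s c = x
  · obtain ⟨c, rfl⟩ := hxEnd
    exact hN.eq_of_reach_startPt_iff hA hx hy fun a => ⟨hyx.trans, h c a .refl⟩
  by_cases hyStart : ∃ c, A.startPt e c = y
  · obtain ⟨c, rfl⟩ := hyStart
    exact hN.eq_of_endPt_reach_iff hA hx hy fun b => ⟨(h b c · .refl), (·.trans hyx)⟩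
  push Not at hxEnd hyStart
  by_contra hne
  obtain ⟨z, hyz, hzx⟩ := hyx.cases_head.resolve_left (Ne.symm hne)
  have hyz_unl : (y, z) ∈ A.unl := AOE.mem_unl_of_adj_of_startPt_ne hyStart hyz
  obtain rfl : z = x := by
    obtain ⟨-, ⟨c, rfl⟩⟩ := hN.exists_label_of_mem_unl y z hyz_unl
    exact hN.eq_of_endPt_reach_iff hA (hN.startPt_mem c) hx fun b =>
      ⟨(·.trans hzx), (h b c · (.single hyz))⟩
  refine hA.false_of_mem_unl hyz_unl (fun ⟨t, ht⟩ => (hyStart (some t) ht).elim)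
    (fun ⟨t, ht⟩ => (hxEnd (some t) ht).elim) fun w a hw ha => ?_
  obtain ⟨⟨b, rfl⟩, -⟩ :=
    hN.exists_label_of_mem_unl w z (AOE.mem_unl_of_adj_of_endPt_ne hxEnd hw)
  obtain ⟨-, ⟨a, rfl⟩⟩ :=
    hN.exists_label_of_mem_unl y a (AOE.mem_unl_of_adj_of_startPt_ne hyStart ha)
  exact h b a (.single hw) (.single ha)

theorem AOE.IsNetwork.startPt_eq_iff (hN : A.IsNetwork s e) (hA : A.Irreducible)
    {a a' : Option T} :
    A.startPt e a = A.startPt e a' ↔ ∀ b, A.Precedes s e b a ↔ A.Precedes s e b a' :=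
  ⟨fun h b => by rw [AOE.Precedes, AOE.Precedes, h],
    hN.eq_of_endPt_reach_iff hA (hN.startPt_mem a) (hN.startPt_mem a')⟩

theorem AOE.IsNetwork.endPt_eq_iff (hN : A.IsNetwork s e) (hA : A.Irreducible)
    {b b' : Option T} :
    A.endPt s b = A.endPt s b' ↔ ∀ a, A.Precedes s e b a ↔ A.Precedes s e b' a :=
  ⟨fun h a => by rw [AOE.Precedes, AOE.Precedes, h],
    hN.eq_of_reach_startPt_iff hA (hN.endPt_mem b) (hN.endPt_mem b')⟩

theorem AOE.IsNetwork.startPt_eq_endPt_iff (hN : A.IsNetwork s e) (hA : A.Irreducible)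
    {a b : Option T} :
    A.startPt e a = A.endPt s b ↔ A.Precedes s e b a ∧
      ∀ b' a', A.Precedes s e b' a → A.Precedes s e b a' → A.Precedes s e b' a' := by
  constructor
  · intro h
    refine ⟨by rw [AOE.Precedes, h], fun b' a' hb' ha' => ?_⟩
    rw [AOE.Precedes, h] at hb'
    exact hb'.trans ha'
  · rintro ⟨hba, h⟩
    exact hN.eq_of_reach_of_forall_reach hA (hN.startPt_mem a) (hN.endPt_mem b) hba h

end Rules

/-! ### Isomorphism of irreducible networks -/

section Isomorphism

variable {A : AOE V T} {B : AOE W T} {s e : V} {s' e' : W}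

theorem AOE.IsNetwork.mem_unl_point_iff [DecidableEq V] (hN : A.IsNetwork s e)
    (hA : A.Irreducible) {l l' : Option T ⊕ Option T} :
    (A.point s e l, A.point s e l') ∈ A.unl ↔
      ReflTransGen A.adj (A.point s e l) (A.point s e l') ∧ A.point s e l ≠ A.point s e l' ∧
      (∀ m, ReflTransGen A.adj (A.point s e l) (A.point s e m) →
        ReflTransGen A.adj (A.point s e m) (A.point s e l') →
        A.point s e m = A.point s e l ∨ A.point s e m = A.point s e l') ∧
      ∀ t, ¬ (A.point s e (.inl (some t)) = A.point s e l ∧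
        A.point s e (.inr (some t)) = A.point s e l') := by
  rw [hA.mem_unl_iff hN.acyclic, ← hN.range_point, Set.forall_mem_range]
  rfl

theorem AOE.IsNetwork.reach_map {φ : V → W} (hA : A.IsNetwork s e)
    (hφ : ∀ l, φ (A.point s e l) = B.point s' e' l)
    (hprec : ∀ o o', A.Precedes s e o o' → B.Precedes s' e' o o') {x y : V}
    (h : ReflTransGen A.adj x y) : ReflTransGen B.adj (φ x) (φ y) := by
  refine ReflTransGen.lift' φ (fun p q hpq => ?_) _ _ h
  rcases hpq with hpq | ⟨t, rfl, rfl⟩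
  · obtain ⟨⟨b, rfl⟩, ⟨a, rfl⟩⟩ := hA.exists_label_of_mem_unl p q hpq
    have hb : φ (A.endPt s b) = B.endPt s' b := hφ (.inr b)
    have ha : φ (A.startPt e a) = B.startPt e' a := hφ (.inl a)
    rw [Function.onFun, hb, ha]
    exact hprec b a (.single (.inl hpq))
  · exact .single (.inr ⟨t, (hφ (.inl (some t))).symm, (hφ (.inr (some t))).symm⟩)

theorem AOE.exists_map_point
    (hpoint : ∀ l l', A.point s e l = A.point s e l' → B.point s' e' l = B.point s' e' l') :
    ∃ φ : V → W, ∀ l, φ (A.point s e l) = B.point s' e' l :=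
  ⟨Function.extend (A.point s e) (B.point s' e') fun _ => s',
    Function.FactorsThrough.extend_apply (fun l l' => hpoint l l') _⟩

theorem AOE.IsNetwork.reach_point (hA : A.IsNetwork s e)
    (hpoint : ∀ l l', A.point s e l = A.point s e l' → B.point s' e' l = B.point s' e' l')
    (hprec : ∀ o o', A.Precedes s e o o' → B.Precedes s' e' o o') {l l' : Option T ⊕ Option T}
    (h : ReflTransGen A.adj (A.point s e l) (A.point s e l')) :
    ReflTransGen B.adj (B.point s' e' l) (B.point s' e' l') := by
  obtain ⟨φ, hφ⟩ := AOE.exists_map_point hpoint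
  rw [← hφ, ← hφ]
  exact hA.reach_map hφ hprec h

theorem AOE.IsNetwork.bijOn_verts {φ : V → W} (hA : A.IsNetwork s e) (hB : B.IsNetwork s' e')
    (hpoint : ∀ l l', A.point s e l = A.point s e l' ↔ B.point s' e' l = B.point s' e' l')
    (hφ : ∀ l, φ (A.point s e l) = B.point s' e' l) : Set.BijOn φ A.verts B.verts := by
  rw [← hA.range_point, ← hB.range_point]
  refine ⟨?_, ?_, ?_⟩
  · rintro _ ⟨l, rfl⟩
    exact ⟨l, (hφ l).symm⟩
  · rintro _ ⟨l, rfl⟩ _ ⟨l', rfl⟩ h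
    rwa [hφ, hφ, ← hpoint] at h
  · rintro _ ⟨l, rfl⟩
    exact ⟨A.point s e l, ⟨l, rfl⟩, hφ l⟩

theorem AOE.IsNetwork.unl_eq_map {φ : V → W} (hA : A.IsNetwork s e) (hB : B.IsNetwork s' e')
    (hφ : ∀ l, φ (A.point s e l) = B.point s' e' l) (hinj : Set.InjOn φ A.verts)
    (hAnodup : A.unl.Nodup) (hBnodup : B.unl.Nodup)
    (hunl : ∀ l l', (A.point s e l, A.point s e l') ∈ A.unl ↔
      (B.point s' e' l, B.point s' e' l') ∈ B.unl) :
    B.unl = A.unl.map fun x => (φ x.1, φ x.2) := by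
  have hmap : (A.unl.map fun x => (φ x.1, φ x.2)).Nodup := by
    refine Multiset.Nodup.map_on (fun x hx y hy hxy => ?_) hAnodup
    obtain ⟨hx₁, hx₂⟩ := A.unlMem x hx
    obtain ⟨hy₁, hy₂⟩ := A.unlMem y hy
    exact Prod.ext (hinj hx₁ hy₁ (congrArg Prod.fst hxy)) (hinj hx₂ hy₂ (congrArg Prod.snd hxy))
  rw [Multiset.Nodup.ext hBnodup hmap]
  rintro ⟨x, y⟩
  rw [Multiset.mem_map]
  constructor
  · intro h
    obtain ⟨⟨b, rfl⟩, ⟨a, rfl⟩⟩ := hB.exists_label_of_mem_unl x y h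
    exact ⟨_, (hunl (.inr b) (.inl a)).2 h, congrArg₂ Prod.mk (hφ (.inr b)) (hφ (.inl a))⟩
  · rintro ⟨⟨p, q⟩, hpq, heq⟩
    obtain ⟨⟨b, rfl⟩, ⟨a, rfl⟩⟩ := hA.exists_label_of_mem_unl p q hpq
    rw [← heq]
    exact congrArg₂ Prod.mk (hφ (.inr b)) (hφ (.inl a)) ▸ (hunl (.inr b) (.inl a)).1 hpq

section Comparison

variable [DecidableEq V] [DecidableEq W]

theorem AOE.IsNetwork.point_eq_iff (hA : A.IsNetwork s e) (hB : B.IsNetwork s' e')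
    (hAirr : A.Irreducible) (hBirr : B.Irreducible)
    (hprec : A.Precedes s e = B.Precedes s' e') (l l' : Option T ⊕ Option T) :
    A.point s e l = A.point s e l' ↔ B.point s' e' l = B.point s' e' l' := by
  rcases l with a | b <;> rcases l' with a' | b' <;>
    simp only [AOE.point, Sum.elim_inl, Sum.elim_inr]
  · rw [hA.startPt_eq_iff hAirr, hB.startPt_eq_iff hBirr, hprec]
  · rw [hA.startPt_eq_endPt_iff hAirr, hB.startPt_eq_endPt_iff hBirr, hprec]
  · rw [eq_comm, hA.startPt_eq_endPt_iff hAirr, eq_comm, hB.startPt_eq_endPt_iff hBirr, hprec]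
  · rw [hA.endPt_eq_iff hAirr, hB.endPt_eq_iff hBirr, hprec]

theorem AOE.IsNetwork.exists_iso (hA : A.IsNetwork s e) (hB : B.IsNetwork s' e')
    (hAirr : A.Irreducible) (hBirr : B.Irreducible)
    (hprec : A.Precedes s e = B.Precedes s' e') :
    ∃ φ : V → W, Set.BijOn φ ↑A.verts ↑B.verts ∧
      (∀ t, φ (A.St t) = B.St t) ∧ (∀ t, φ (A.En t) = B.En t) ∧
      B.unl = A.unl.map fun x : V × V => (φ x.1, φ x.2) := by
  have hpoint : ∀ l l', A.point s e l = A.point s e l' ↔ B.point s' e' l = B.point s' e' l' :=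
    hA.point_eq_iff hB hAirr hBirr hprec
  have hreach : ∀ l l', ReflTransGen A.adj (A.point s e l) (A.point s e l') ↔
      ReflTransGen B.adj (B.point s' e' l) (B.point s' e' l') := fun _ _ =>
    ⟨hA.reach_point (fun l l' => (hpoint l l').1) fun o o' => (congrFun₂ hprec o o').mp,
      hB.reach_point (fun l l' => (hpoint l l').2) fun o o' => (congrFun₂ hprec o o').mpr⟩
  obtain ⟨φ, hφ⟩ := AOE.exists_map_point fun l l' => (hpoint l l').1
  have hbij : Set.BijOn φ A.verts B.verts := hA.bijOn_verts hB hpoint hφ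
  refine ⟨φ, hbij, fun t => hφ (.inl (some t)), fun t => hφ (.inr (some t)), ?_⟩
  refine hA.unl_eq_map hB hφ hbij.injOn hAirr.nodup_unl hBirr.nodup_unl fun l l' => ?_
  simp only [hA.mem_unl_point_iff hAirr, hB.mem_unl_point_iff hBirr, hreach, hpoint, ne_eq]

end Comparison

end Isomorphism

theorem stmt13_general [DecidableEq V] {G A₁ A₂ : AOE V T} {s e : V} (hG : G.IsNetwork s e)
    (h₁ : ReflTransGen Step G A₁) (hA₁ : A₁.Irreducible)
    (h₂ : ReflTransGen Step G A₂) (hA₂ : A₂.Irreducible) :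
    ∃ φ : V → V, Set.BijOn φ ↑A₁.verts ↑A₂.verts ∧
      (∀ t, φ (A₁.St t) = A₂.St t) ∧ (∀ t, φ (A₁.En t) = A₂.En t) ∧
      A₂.unl = A₁.unl.map fun x : V × V => (φ x.1, φ x.2) := by
  obtain ⟨_, _, hN₁, hprec₁⟩ := hG.exists_of_steps h₁
  obtain ⟨_, _, hN₂, hprec₂⟩ := hG.exists_of_steps h₂
  exact hN₁.exists_iso hN₂ hA₁ hA₂ (hprec₁.trans hprec₂.symm)

end

/-- The algorithm's output is independent of the order of rule
applications: any two outputs obtained from the same canonical AOE are isomorphic via a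
bijection of their vertex sets that identifies each task's start and end vertices and
matches the unlabeled edges. -/
theorem stmt13 {V T : Type} [DecidableEq V] [Fintype T] (G A₁ A₂ : AOE V T)
    (h₁ : IsOutput G A₁) (h₂ : IsOutput G A₂) :
    ∃ φ : V → V, Set.BijOn φ ↑A₁.verts ↑A₂.verts ∧
      (∀ t, φ (A₁.St t) = A₂.St t) ∧ (∀ t, φ (A₁.En t) = A₂.En t) ∧
      A₂.unl = A₁.unl.map fun e : V × V => (φ e.1, φ e.2) := by
  obtain ⟨s, e, hG⟩ := h₁.1.exists_isNetwork
  exact stmt13_general hG h₁.2.1 h₁.2.2 h₂.2.1 h₂.2.2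

end AOEPaper
end
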